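/- arXiv:2404.05355 — 2 statements merged into one kernel-verified Lean document; each statement's English description precedes it below -/
import Mathlib

section
/- Let A ∈ ℝ^{n×n} be a matrix all of whose eigenvalues over ℂ have negative real part, and let g : ℝ → ℝⁿ be continuous and bounded. Then for every t ∈ ℝ the improper integral x(t) = ∫_{−∞}^{t} e^{A(t−τ)} g(τ) dτ converges; the function x so defined is a bounded solution of ẋ = A x + g(t) on all of ℝ; and every solution of ẋ = A x + g(t) that is bounded on ℝ coincides with x. -/
open MeasureTheory

/-- The action of the matrix exponential `e^{tA}` on a vector of `EuclideanSpace ℝ (Fin n)`. -/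
noncomputable def expAct {n : ℕ} (A : Matrix (Fin n) (Fin n) ℝ) (t : ℝ)
    (v : EuclideanSpace ℝ (Fin n)) : EuclideanSpace ℝ (Fin n) :=
  Matrix.toEuclideanLin (NormedSpace.exp (t • A)) v

/-! Since `exp` maps the spectrum of `A` onto that of `exp A`, the spectral radius of `exp A` is
less than one, and by Gelfand's formula some power of `exp A` is a strict contraction; the
semigroup property then gives `‖e^{tA}‖ ≤ M e^{-δt}` for `t ≥ 0`. This bound makes the integral
converge and stay bounded, and it forces a bounded solution `z` of `ż = A z` to vanish, because
`z t = e^{rA} z (t - r)` for every `r ≥ 0`. -/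

open Filter Topology
open NormedSpace (exp)

section Centralizer

variable {R A : Type*} {s : Set A}

theorem isUnit_centralizer_iff [CommSemiring R] [Semiring A] [Algebra R A]
    {x : Subalgebra.centralizer R s} : IsUnit x ↔ IsUnit (x : A) := by
  refine ⟨fun hx => hx.map (Subalgebra.centralizer R s).val, ?_⟩
  rintro ⟨u, hu⟩
  have inv_mem : (↑u⁻¹ : A) ∈ Subalgebra.centralizer R s := fun b hb => by
    have hcomm : Commute b u := hu ▸ x.2 b hb
    exact hcomm.units_inv_right
  refine isUnit_iff_exists.mpr ⟨⟨↑u⁻¹, inv_mem⟩, Subtype.ext ?_, Subtype.ext ?_⟩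
  · simp [← hu]
  · simp [← hu]

theorem spectrum_centralizer [CommRing R] [Ring A] [Algebra R A] (x : Subalgebra.centralizer R s) :
    spectrum R x = spectrum R (x : A) :=
  Set.ext fun _ => not_congr isUnit_centralizer_iff

end Centralizer

section SpectralMapping

theorem spectrum_exp_of_comm {𝔸 : Type*} [NormedCommRing 𝔸] [NormedAlgebra ℂ 𝔸] [CompleteSpace 𝔸]
    (a : 𝔸) : spectrum ℂ (exp a) = Complex.exp '' spectrum ℂ a := by
  let _ : NormedAlgebra ℚ 𝔸 := .restrictScalars ℚ ℂ 𝔸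
  have map_exp (φ : WeakDual.characterSpace ℂ 𝔸) : φ (exp a) = Complex.exp (φ a) := by
    rw [NormedSpace.map_exp φ (map_continuous φ), Complex.exp_eq_exp_ℂ]
  ext μ
  simp [WeakDual.CharacterSpace.mem_spectrum_iff_exists, map_exp]

variable {𝔸 : Type*} [NormedRing 𝔸] [NormedAlgebra ℂ 𝔸] [CompleteSpace 𝔸] {a : 𝔸}

/- The bicommutant of `a` is a commutative Banach algebra in which `a` and `exp a` keep their
spectra, which reduces the claim to the commutative case. -/
theorem spectrum_exp (a : 𝔸) : spectrum ℂ (exp a) = Complex.exp '' spectrum ℂ a := by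
  let _ : NormedAlgebra ℚ 𝔸 := .restrictScalars ℚ ℂ 𝔸
  let B := Subalgebra.centralizer ℂ (Set.centralizer {a})
  let _ : NormedAlgebra ℚ B := .restrictScalars ℚ ℂ B
  have : CompleteSpace B := (Set.isClosed_centralizer _).completeSpace_coe
  let _ : NormedCommRing B :=
    { (inferInstance : NormedRing B) with
      mul_comm := fun x y => Subtype.ext <|
        Set.centralizer_centralizer_comm_of_comm (S := {a}) (by simp) x x.2 y y.2 }
  let b : B := ⟨a, Set.subset_centralizer_centralizer rfl⟩
  have coe_exp : ((exp b : B) : 𝔸) = exp a :=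
    NormedSpace.map_exp B.val continuous_subtype_val b
  rw [← coe_exp, ← spectrum_centralizer, spectrum_exp_of_comm b, spectrum_centralizer b]

theorem spectralRadius_exp_lt_one (ha : ∀ μ ∈ spectrum ℂ a, μ.re < 0) :
    spectralRadius ℂ (exp a) < 1 := by
  cases subsingleton_or_nontrivial 𝔸
  · simp
  · refine spectrum.spectralRadius_lt_of_forall_lt _ (r := 1) fun z hz => ?_
    rw [spectrum_exp] at hz
    obtain ⟨μ, hμ, rfl⟩ := hz
    rw [← NNReal.coe_lt_coe, coe_nnnorm, Complex.norm_exp, NNReal.coe_one]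
    exact Real.exp_lt_one_iff.mpr (ha μ hμ)

theorem exists_norm_pow_lt_one (ha : spectralRadius ℂ a < 1) : ∃ n, 0 < n ∧ ‖a ^ n‖ < 1 := by
  have gelfand := spectrum.pow_norm_pow_one_div_tendsto_nhds_spectralRadius a
  obtain ⟨n, hn, hpos⟩ := ((gelfand.eventually_lt_const ha).and (eventually_gt_atTop 0)).exists
  rw [ENNReal.ofReal_lt_one, Real.rpow_lt_one_iff' (norm_nonneg _) (by positivity)] at hn
  exact ⟨n, hpos, hn⟩

end SpectralMapping

section ExpStable

variable {𝔸 : Type*} [NormedRing 𝔸] [NormedAlgebra ℝ 𝔸] {a : 𝔸}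

/-- Uniform exponential stability of the semigroup `t ↦ exp (t • a)`, `t ≥ 0`, generated by `a`. -/
def IsExpStable (a : 𝔸) : Prop :=
  ∃ M δ : ℝ, 0 < δ ∧ ∀ t, 0 ≤ t → ‖exp (t • a)‖ ≤ M * Real.exp (-δ * t)

variable [CompleteSpace 𝔸]

theorem exp_add_smul (a : 𝔸) (s t : ℝ) : exp ((s + t) • a) = exp (s • a) * exp (t • a) := by
  let _ : NormedAlgebra ℚ 𝔸 := .restrictScalars ℚ ℝ 𝔸
  rw [add_smul, NormedSpace.exp_add_of_commute (((Commute.refl a).smul_left s).smul_right t)]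

theorem exp_nat_mul_smul (a : 𝔸) (n : ℕ) (s : ℝ) : exp ((n * s) • a) = exp (s • a) ^ n := by
  let _ : NormedAlgebra ℚ 𝔸 := .restrictScalars ℚ ℝ 𝔸
  rw [mul_smul, Nat.cast_smul_eq_nsmul, NormedSpace.exp_nsmul]

theorem continuous_exp_smul (a : 𝔸) : Continuous fun t : ℝ => exp (t • a) :=
  continuous_iff_continuousAt.mpr fun t => (hasDerivAt_exp_smul_const a t).continuousAt

theorem IsExpStable.of_norm_exp_smul_lt_one {s : ℝ} (hs : 0 < s) (h : ‖exp (s • a)‖ < 1) :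
    IsExpStable a := by
  obtain ⟨q, hq, hq1⟩ := exists_between h
  have hq0 : 0 < q := (norm_nonneg _).trans_lt hq
  obtain ⟨K, hK⟩ := (isCompact_Icc (a := -s) (b := 0)).exists_bound_of_continuousOn
    (continuous_exp_smul a).continuousOn
  have hlog : Real.log q / s < 0 := div_neg_of_neg_of_pos (Real.log_neg hq0 hq1) hs
  refine ⟨K, -(Real.log q / s), neg_pos.mpr hlog, fun t ht => ?_⟩
  -- `n * s` overshoots `t`, so that `n` is positive and the remainder stays in `[-s, 0]`.
  set n := ⌊t / s⌋₊ + 1 with hn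
  have hlt : t < n * s := by
    rw [← div_lt_iff₀ hs]; exact_mod_cast Nat.lt_floor_add_one (t / s)
  have hle : n * s ≤ t + s := by
    have := (le_div_iff₀ hs).mp (Nat.floor_le (div_nonneg ht hs.le))
    rw [hn]; push_cast; linarith
  have hpow : q ^ n ≤ Real.exp (Real.log q / s * t) := by
    rw [← Real.exp_log (pow_pos hq0 n), Real.log_pow, Real.exp_le_exp]
    calc n * Real.log q = Real.log q / s * (n * s) := by field_simp
      _ ≤ Real.log q / s * t := mul_le_mul_of_nonpos_left hlt.le hlog.le
  calc ‖exp (t • a)‖ = ‖exp (s • a) ^ n * exp ((t - n * s) • a)‖ := by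
        rw [← exp_nat_mul_smul, ← exp_add_smul, add_sub_cancel]
    _ ≤ ‖exp (s • a)‖ ^ n * ‖exp ((t - n * s) • a)‖ :=
        (norm_mul_le _ _).trans (by gcongr; exact norm_pow_le' _ (Nat.succ_pos _))
    _ ≤ Real.exp (Real.log q / s * t) * K := by
        gcongr
        · exact (pow_le_pow_left₀ (norm_nonneg _) hq.le n).trans hpow
        · exact hK _ ⟨by linarith, by linarith⟩
    _ = K * Real.exp (-(-(Real.log q / s)) * t) := by rw [neg_neg, mul_comm]

theorem IsExpStable.of_map_injective [FiniteDimensional ℝ 𝔸] {𝔹 : Type*} [NormedRing 𝔹]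
    [NormedAlgebra ℝ 𝔹] (f : 𝔸 →ₐ[ℝ] 𝔹) (hf : Function.Injective f) (h : IsExpStable (f a)) :
    IsExpStable a := by
  let _ : NormedAlgebra ℚ 𝔸 := .restrictScalars ℚ ℝ 𝔸
  let _ : NormedAlgebra ℚ 𝔹 := .restrictScalars ℚ ℝ 𝔹
  obtain ⟨M, δ, hδ, hM⟩ := h
  obtain ⟨K, -, hK⟩ := f.toLinearMap.injective_iff_antilipschitz.mp hf
  have map_exp (t : ℝ) : f (exp (t • a)) = exp (t • f a) := by
    rw [NormedSpace.map_exp f f.toLinearMap.continuous_of_finiteDimensional, map_smul]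
  refine ⟨K * M, δ, hδ, fun t ht => ?_⟩
  calc ‖exp (t • a)‖ ≤ K * ‖f (exp (t • a))‖ :=
        ZeroHomClass.bound_of_antilipschitz f.toLinearMap hK _
    _ ≤ K * (M * Real.exp (-δ * t)) := by rw [map_exp]; gcongr; exact hM t ht
    _ = K * M * Real.exp (-δ * t) := by ring

theorem IsExpStable.of_spectrum_re_neg {𝔹 : Type*} [NormedRing 𝔹] [NormedAlgebra ℂ 𝔹]
    [CompleteSpace 𝔹] {b : 𝔹} (hb : ∀ μ ∈ spectrum ℂ b, μ.re < 0) : IsExpStable b := by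
  obtain ⟨n, hn, hlt⟩ := exists_norm_pow_lt_one (spectralRadius_exp_lt_one hb)
  have hexp : exp ((n : ℝ) • b) = exp b ^ n := by simpa using exp_nat_mul_smul b n 1
  exact .of_norm_exp_smul_lt_one (Nat.cast_pos.mpr hn) (hexp ▸ hlt)

end ExpStable

section IntegralIic

theorem exp_mul_sub_eq (c t τ : ℝ) :
    Real.exp (-c * (t - τ)) = Real.exp (-(c * t)) * Real.exp (c * τ) := by
  rw [← Real.exp_add]
  ring_nf

theorem integrableOn_exp_mul_sub_Iic {c : ℝ} (hc : 0 < c) (t : ℝ) :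
    IntegrableOn (fun τ => Real.exp (-c * (t - τ))) (Set.Iic t) := by
  simp_rw [exp_mul_sub_eq]
  exact (integrableOn_exp_mul_Iic hc t).const_mul _

theorem integral_exp_mul_sub_Iic {c : ℝ} (hc : 0 < c) (t : ℝ) :
    ∫ τ in Set.Iic t, Real.exp (-c * (t - τ)) = 1 / c := by
  simp_rw [exp_mul_sub_eq]
  rw [integral_const_mul, integral_exp_mul_Iic hc, ← mul_div_assoc, ← Real.exp_add,
    neg_add_cancel, Real.exp_zero]

variable {E : Type*} [NormedAddCommGroup E] {f : ℝ → E} {t : ℝ}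

theorem integrableOn_Iic_of_continuous (hf : Continuous f)
    (hint : IntegrableOn f (Set.Iic t)) (s : ℝ) : IntegrableOn f (Set.Iic s) :=
  (hint.union hf.integrableOn_Icc).mono_set Set.Iic_subset_Iic_union_Icc

theorem hasDerivAt_integral_Iic [NormedSpace ℝ E] [CompleteSpace E] (hf : Continuous f)
    (hint : IntegrableOn f (Set.Iic t)) : HasDerivAt (fun s => ∫ τ in Set.Iic s, f τ) (f t) t := by
  have split (s : ℝ) : ∫ τ in Set.Iic s, f τ = (∫ τ in Set.Iic t, f τ) + ∫ τ in t..s, f τ := by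
    rw [← intervalIntegral.integral_Iic_sub_Iic hint
      (integrableOn_Iic_of_continuous hf hint s), add_sub_cancel]
  rw [funext split]
  exact (intervalIntegral.integral_hasDerivAt_right (hf.intervalIntegrable t t)
    (hf.stronglyMeasurableAtFilter _ _) hf.continuousAt).const_add _

end IntegralIic

section LinearODE

variable {E : Type*} [NormedAddCommGroup E] [NormedSpace ℝ E] {T : E →L[ℝ] E} {g y : ℝ → E}

/-- The solution `x t = ∫_{-∞}^t e^{(t-τ)T} g(τ) dτ` of `ẋ = T x + g(t)` obtained by letting the
initial time tend to `-∞` in the variation of constants formula. -/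
noncomputable def boundedSolution (T : E →L[ℝ] E) (g : ℝ → E) (t : ℝ) : E :=
  ∫ τ in Set.Iic t, exp ((t - τ) • T) (g τ)

theorem IsExpStable.exists_norm_apply_le (hT : IsExpStable T) {C : ℝ} (hC : ∀ t, ‖g t‖ ≤ C) :
    ∃ K δ : ℝ, 0 < δ ∧ ∀ t τ, τ ≤ t →
      ‖exp ((t - τ) • T) (g τ)‖ ≤ K * Real.exp (-δ * (t - τ)) := by
  obtain ⟨M, δ, hδ, hM⟩ := hT
  refine ⟨M * C, δ, hδ, fun t τ hτ => ?_⟩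
  calc ‖exp ((t - τ) • T) (g τ)‖ ≤ M * Real.exp (-δ * (t - τ)) * C :=
        ContinuousLinearMap.le_of_opNorm_le_of_le _ (hM _ (sub_nonneg.mpr hτ)) (hC τ)
    _ = M * C * Real.exp (-δ * (t - τ)) := by ring

theorem IsExpStable.exists_norm_boundedSolution_le (hT : IsExpStable T)
    (hgb : ∃ C, ∀ t, ‖g t‖ ≤ C) : ∃ C, ∀ t, ‖boundedSolution T g t‖ ≤ C := by
  obtain ⟨C, hC⟩ := hgb
  obtain ⟨K, δ, hδ, hK⟩ := hT.exists_norm_apply_le hC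
  refine ⟨K * (1 / δ), fun t => ?_⟩
  rw [← integral_exp_mul_sub_Iic hδ t, ← integral_const_mul]
  exact norm_integral_le_of_norm_le ((integrableOn_exp_mul_sub_Iic hδ t).const_mul K)
    ((ae_restrict_mem measurableSet_Iic).mono (hK t))

variable [CompleteSpace E]

theorem continuous_exp_sub_smul_apply (T : E →L[ℝ] E) (hg : Continuous g) (t : ℝ) :
    Continuous fun τ => exp ((t - τ) • T) (g τ) :=
  ((continuous_exp_smul T).comp (continuous_const.sub continuous_id)).clm_apply hg

theorem IsExpStable.integrableOn_exp_sub_smul_apply (hT : IsExpStable T) (hg : Continuous g)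
    (hgb : ∃ C, ∀ t, ‖g t‖ ≤ C) (t : ℝ) :
    IntegrableOn (fun τ => exp ((t - τ) • T) (g τ)) (Set.Iic t) := by
  obtain ⟨C, hC⟩ := hgb
  obtain ⟨K, δ, hδ, hK⟩ := hT.exists_norm_apply_le hC
  exact ((integrableOn_exp_mul_sub_Iic hδ t).const_mul K).mono'
    (continuous_exp_sub_smul_apply T hg t).aestronglyMeasurable
    ((ae_restrict_mem measurableSet_Iic).mono (hK t))

theorem exp_sub_smul_apply_eq (T : E →L[ℝ] E) (s t τ : ℝ) (v : E) :
    exp ((s - τ) • T) v = exp ((s - t) • T) (exp ((t - τ) • T) v) := by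
  rw [← sub_add_sub_cancel s t τ]
  exact DFunLike.congr_fun (exp_add_smul T (s - t) (t - τ)) v

theorem boundedSolution_eq_exp_smul_apply {s t : ℝ}
    (hint : IntegrableOn (fun τ => exp ((t - τ) • T) (g τ)) (Set.Iic s)) :
    boundedSolution T g s = exp ((s - t) • T) (∫ τ in Set.Iic s, exp ((t - τ) • T) (g τ)) := by
  rw [← ContinuousLinearMap.integral_comp_comm _ hint]
  simp_rw [← exp_sub_smul_apply_eq]
  rfl

theorem hasDerivAt_boundedSolution (hg : Continuous g) {t : ℝ}
    (hint : IntegrableOn (fun τ => exp ((t - τ) • T) (g τ)) (Set.Iic t)) :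
    HasDerivAt (boundedSolution T g) (T (boundedSolution T g t) + g t) t := by
  have hexp : HasDerivAt (fun s : ℝ => exp ((s - t) • T)) T t := by
    simpa using (hasDerivAt_exp_smul_const T (t - t)).comp_sub_const t t
  have hcont := continuous_exp_sub_smul_apply T hg t
  have hintegral := hasDerivAt_integral_Iic hcont hint
  have hfactor (s : ℝ) := boundedSolution_eq_exp_smul_apply (T := T) (g := g)
    (integrableOn_Iic_of_continuous hcont hint s)
  rw [funext hfactor]
  simpa using hexp.clm_apply hintegral

theorem eq_exp_smul_apply_of_hasDerivAt (hy : ∀ t, HasDerivAt y (T (y t)) t) (s t : ℝ) :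
    y t = exp ((t - s) • T) (y s) := by
  have hderiv (u : ℝ) : HasDerivAt (fun u => exp ((t - u) • T) (y u)) 0 u := by
    simpa using ((hasDerivAt_exp_smul_const T (t - u)).comp_const_sub t u).clm_apply (hy u)
  simpa using is_const_of_deriv_eq_zero (fun u => (hderiv u).differentiableAt)
    (fun u => (hderiv u).deriv) t s

theorem IsExpStable.eq_zero_of_hasDerivAt_of_bounded (hT : IsExpStable T)
    (hy : ∀ t, HasDerivAt y (T (y t)) t) (hyb : ∃ C, ∀ t, ‖y t‖ ≤ C) : y = 0 := by
  obtain ⟨C, hC⟩ := hyb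
  obtain ⟨K, δ, hδ, hK⟩ := hT.exists_norm_apply_le hC
  funext t
  have hlim : Tendsto (fun r => K * Real.exp (-δ * r)) atTop (𝓝 0) := by
    simpa using (Real.tendsto_exp_atBot.comp
      (tendsto_id.const_mul_atTop_of_neg (neg_lt_zero.mpr hδ))).const_mul K
  have hbound : ∀ᶠ r in atTop, ‖y t‖ ≤ K * Real.exp (-δ * r) := by
    filter_upwards [eventually_ge_atTop 0] with r hr
    rw [eq_exp_smul_apply_of_hasDerivAt hy (t - r) t]
    simpa using hK t (t - r) (sub_le_self t hr)
  exact norm_le_zero_iff.mp (ge_of_tendsto hlim hbound)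

theorem IsExpStable.eq_boundedSolution (hT : IsExpStable T) (hg : Continuous g)
    (hgb : ∃ C, ∀ t, ‖g t‖ ≤ C) (hy : ∀ t, HasDerivAt y (T (y t) + g t) t)
    (hyb : ∃ C, ∀ t, ‖y t‖ ≤ C) : y = boundedSolution T g := by
  obtain ⟨C, hC⟩ := hyb
  obtain ⟨K, hK⟩ := hT.exists_norm_boundedSolution_le hgb
  refine sub_eq_zero.mp (hT.eq_zero_of_hasDerivAt_of_bounded (fun t => ?_)
    ⟨C + K, fun t => norm_sub_le_of_le (hC t) (hK t)⟩)
  have hx := hasDerivAt_boundedSolution hg (hT.integrableOn_exp_sub_smul_apply hg hgb t)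
  simpa using (hy t).sub hx

theorem stmt_1_general (hT : IsExpStable T) (hg : Continuous g) (hgb : ∃ C, ∀ t, ‖g t‖ ≤ C) :
    (∀ t, IntegrableOn (fun τ => exp ((t - τ) • T) (g τ)) (Set.Iic t)) ∧
    (∃ C, ∀ t, ‖boundedSolution T g t‖ ≤ C) ∧
    (∀ t, HasDerivAt (boundedSolution T g) (T (boundedSolution T g t) + g t) t) ∧
    (∀ y : ℝ → E, (∀ t, HasDerivAt y (T (y t) + g t) t) → (∃ C, ∀ t, ‖y t‖ ≤ C) →
      ∀ t, y t = boundedSolution T g t) :=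
  have hint := hT.integrableOn_exp_sub_smul_apply hg hgb
  ⟨hint, hT.exists_norm_boundedSolution_le hgb, fun t => hasDerivAt_boundedSolution hg (hint t),
    fun _ hy hyb => congrFun (hT.eq_boundedSolution hg hgb hy hyb)⟩

end LinearODE

section Matrix

variable {n : ℕ} {A : Matrix (Fin n) (Fin n) ℝ}

open scoped Matrix.Norms.Operator in
theorem expAct_eq_exp_smul_toEuclideanCLM (A : Matrix (Fin n) (Fin n) ℝ) (t : ℝ)
    (v : EuclideanSpace ℝ (Fin n)) :
    expAct A t v = exp (t • Matrix.toEuclideanCLM (n := Fin n) (𝕜 := ℝ) A) v := by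
  let _ : NormedAlgebra ℚ (Matrix (Fin n) (Fin n) ℝ) := .restrictScalars ℚ ℝ _
  let _ : NormedAlgebra ℚ (EuclideanSpace ℝ (Fin n) →L[ℝ] EuclideanSpace ℝ (Fin n)) :=
    .restrictScalars ℚ ℝ _
  rw [← map_smul, ← NormedSpace.map_exp (Matrix.toEuclideanCLM (n := Fin n) (𝕜 := ℝ))
    (LinearMap.continuous_of_finiteDimensional
      (Matrix.toEuclideanCLM (n := Fin n) (𝕜 := ℝ)).toAlgEquiv.toLinearMap)]
  rfl

open scoped Matrix.Norms.Operator in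
theorem isExpStable_toEuclideanCLM (hA : ∀ μ ∈ spectrum ℂ (A.map Complex.ofReal), μ.re < 0) :
    IsExpStable (Matrix.toEuclideanCLM (n := Fin n) (𝕜 := ℝ) A) := by
  let e := (Matrix.toEuclideanCLM (n := Fin n) (𝕜 := ℝ)).toAlgEquiv
  let complexify : Matrix (Fin n) (Fin n) ℝ →ₐ[ℝ] Matrix (Fin n) (Fin n) ℂ :=
    Complex.ofRealAm.mapMatrix
  have hinj : Function.Injective (complexify.comp e.symm.toAlgHom) :=
    (Matrix.map_injective Complex.ofReal_injective).comp e.symm.injective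
  refine .of_map_injective _ hinj ?_
  have heq : complexify.comp e.symm.toAlgHom (e A) = A.map Complex.ofReal :=
    congrArg complexify (e.symm_apply_apply A)
  exact heq ▸ IsExpStable.of_spectrum_re_neg hA

end Matrix

/-- if all eigenvalues of `A` over `ℂ` have negative real part and `g` is
continuous and bounded, then `x t = ∫_{-∞}^t e^{A(t-τ)} g(τ) dτ` converges, is bounded,
solves `ẋ = A x + g(t)` on all of `ℝ`, and is the unique solution bounded on `ℝ`. -/
theorem stmt_1 {n : ℕ} (A : Matrix (Fin n) (Fin n) ℝ)
    (hspec : ∀ μ ∈ spectrum ℂ (A.map Complex.ofReal), μ.re < 0)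
    (g : ℝ → EuclideanSpace ℝ (Fin n))
    (hgc : Continuous g) (hgb : ∃ C : ℝ, ∀ t : ℝ, ‖g t‖ ≤ C) :
    (∀ t : ℝ, IntegrableOn (fun τ => expAct A (t - τ) (g τ)) (Set.Iic t)) ∧
    (∃ C : ℝ, ∀ t : ℝ, ‖∫ τ in Set.Iic t, expAct A (t - τ) (g τ)‖ ≤ C) ∧
    (∀ t : ℝ, HasDerivAt (fun s => ∫ τ in Set.Iic s, expAct A (s - τ) (g τ))
      (Matrix.toEuclideanLin A (∫ τ in Set.Iic t, expAct A (t - τ) (g τ)) + g t) t) ∧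
    (∀ y : ℝ → EuclideanSpace ℝ (Fin n),
      (∀ t : ℝ, HasDerivAt y (Matrix.toEuclideanLin A (y t) + g t) t) →
      (∃ C : ℝ, ∀ t : ℝ, ‖y t‖ ≤ C) →
      ∀ t : ℝ, y t = ∫ τ in Set.Iic t, expAct A (t - τ) (g τ)) := by
  simp only [expAct_eq_exp_smul_toEuclideanCLM]
  exact stmt_1_general (isExpStable_toEuclideanCLM hspec) hgc hgb
end

section
/- Assume in addition that f is C² and x is C³ in (α,ε). Then x₂(α) := (1/2) ∂²_ε x_ε(α)|_{ε=0} satisfies x₂(α) = A(α)^{−1} [ x₁′(α) − (1/2) D²_x f(x₀(α), α)(x₁(α), x₁(α)) ] for every α ∈ ℝ, where x₁(α) = A(α)^{−1} x₀′(α) and D²_x f(x₀(α), α) is the second derivative of f in x at (x₀(α), α) viewed as a symmetric bilinear map. -/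
/-!
Differentiate `ε ∂_α x = f(x, α)` in `ε` at `ε = 0`. Since `ε • g ε` has first derivative `g 0` and
second derivative `2 g'(0)` there, the chain rule gives `A x₁ = x₀'` and
`2 ∂_ε∂_α x = D²f(x₁, x₁) + A ∂²_ε x`, where `x₁ = ∂_ε x`. The mixed partial derivatives commute, so
`∂_ε∂_α x = x₁'`, and solving for `∂²_ε x / 2` gives the formula. Because of the factor `ε`, the
third derivatives of `x` never enter.
-/

open Set

section SubSMul

variable {𝕜 E F : Type*} [NontriviallyNormedField 𝕜]
  [NormedAddCommGroup E] [NormedSpace 𝕜 E] [NormedAddCommGroup F] [NormedSpace 𝕜 F]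
  {s : Set 𝕜} {a : 𝕜}

theorem hasDerivWithinAt_sub_smul_of_continuousWithinAt {g : 𝕜 → E}
    (hg : ContinuousWithinAt g s a) : HasDerivWithinAt (fun t => (t - a) • g t) (g a) s a := by
  rw [hasDerivWithinAt_iff_tendsto_slope]
  refine (hg.mono sdiff_subset).tendsto.congr' ?_
  filter_upwards [self_mem_nhdsWithin] with t ht
  exact (slope_sub_smul g (Ne.symm ht.2)).symm

theorem iteratedDerivWithin_two_sub_smul {g : 𝕜 → E} (hs : UniqueDiffOn 𝕜 s) (ha : a ∈ s)
    (hg : DifferentiableOn 𝕜 g s) (hg' : ContinuousWithinAt (derivWithin g s) s a) :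
    iteratedDerivWithin 2 (fun t => (t - a) • g t) s a = (2 : 𝕜) • derivWithin g s a := by
  have hderiv : EqOn (derivWithin (fun t => (t - a) • g t) s)
      (fun t => (t - a) • derivWithin g s t + g t) s := fun t ht => by
    simpa [Pi.smul_def'] using (((hasDerivWithinAt_id t s).sub_const a).smul
      (hg t ht).hasDerivWithinAt).derivWithin (hs t ht)
  rw [iteratedDerivWithin_succ, iteratedDerivWithin_one,
    derivWithin_congr hderiv (hderiv ha), two_smul]
  exact ((hasDerivWithinAt_sub_smul_of_continuousWithinAt hg').add
    (hg a ha).hasDerivWithinAt).derivWithin (hs a ha)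

variable {f : E → F} {φ : 𝕜 → E} {g : 𝕜 → F}

theorem fderiv_derivWithin_eq_of_comp_eq_sub_smul (hs : UniqueDiffWithinAt 𝕜 s a) (ha : a ∈ s)
    (hf : DifferentiableAt 𝕜 f (φ a)) (hφ : DifferentiableWithinAt 𝕜 φ s a)
    (hg : ContinuousWithinAt g s a) (h : EqOn (f ∘ φ) (fun t => (t - a) • g t) s) :
    fderiv 𝕜 f (φ a) (derivWithin φ s a) = g a := by
  have hchain : HasDerivWithinAt (f ∘ φ) (fderiv 𝕜 f (φ a) (derivWithin φ s a)) s a :=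
    hf.hasFDerivAt.comp_hasDerivWithinAt a hφ.hasDerivWithinAt
  have hsmul : HasDerivWithinAt (f ∘ φ) (g a) s a :=
    (hasDerivWithinAt_sub_smul_of_continuousWithinAt hg).congr h (h ha)
  exact hs.eq_deriv s hchain hsmul

theorem fderiv_iteratedDerivWithin_two_eq_of_comp_eq_sub_smul (hs : UniqueDiffOn 𝕜 s) (ha : a ∈ s)
    (hf : ContDiffAt 𝕜 2 f (φ a)) (hφ : ContDiffWithinAt 𝕜 2 φ s a)
    (hg : DifferentiableOn 𝕜 g s) (hg' : ContinuousWithinAt (derivWithin g s) s a)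
    (h : EqOn (f ∘ φ) (fun t => (t - a) • g t) s) :
    fderiv 𝕜 f (φ a) (iteratedDerivWithin 2 φ s a) = (2 : 𝕜) • derivWithin g s a
      - fderiv 𝕜 (fderiv 𝕜 f) (φ a) (derivWithin φ s a) (derivWithin φ s a) := by
  have hchain := iteratedDerivWithin_vcomp_two (t := univ) hf.contDiffWithinAt hφ
    uniqueDiffOn_univ hs ha (mapsTo_univ φ s)
  rw [iteratedDerivWithin_congr h ha, iteratedDerivWithin_two_sub_smul hs ha hg hg',
    iteratedFDerivWithin_univ, iteratedFDeriv_two_apply, fderivWithin_univ] at hchain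
  exact eq_sub_of_add_eq' hchain.symm

end SubSMul

section PartialDerivatives

variable {𝕜 E : Type*} [NontriviallyNormedField 𝕜] [NormedAddCommGroup E] [NormedSpace 𝕜 E]
  {X : 𝕜 × 𝕜 → E} {s t : Set 𝕜} {a b : 𝕜}

theorem derivWithin_prodMk_left_eq_fderivWithin (hs : UniqueDiffWithinAt 𝕜 s a) (hb : b ∈ t)
    (hX : DifferentiableWithinAt 𝕜 X (s ×ˢ t) (a, b)) :
    derivWithin (fun u => X (u, b)) s a = fderivWithin 𝕜 X (s ×ˢ t) (a, b) (1, 0) :=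
  (hX.hasFDerivWithinAt.comp_hasDerivWithinAt a
    ((hasDerivWithinAt_id a s).prodMk (hasDerivWithinAt_const a s b))
    fun _ hu => mk_mem_prod hu hb).derivWithin hs

theorem derivWithin_prodMk_right_eq_fderivWithin (ht : UniqueDiffWithinAt 𝕜 t b) (ha : a ∈ s)
    (hX : DifferentiableWithinAt 𝕜 X (s ×ˢ t) (a, b)) :
    derivWithin (fun v => X (a, v)) t b = fderivWithin 𝕜 X (s ×ˢ t) (a, b) (0, 1) :=
  (hX.hasFDerivWithinAt.comp_hasDerivWithinAt b
    ((hasDerivWithinAt_const b t a).prodMk (hasDerivWithinAt_id b t))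
    fun _ hv => mk_mem_prod ha hv).derivWithin ht

theorem contDiffOn_derivWithin_prodMk_left {m n : WithTop ℕ∞} (hs : UniqueDiffOn 𝕜 s)
    (ht : UniqueDiffOn 𝕜 t) (ha : a ∈ s) (hX : ContDiffOn 𝕜 n X (s ×ˢ t)) (hmn : m + 1 ≤ n) :
    ContDiffOn 𝕜 m (fun v => derivWithin (fun u => X (u, v)) s a) t := by
  have hD : ContDiffOn 𝕜 m (fun v => fderivWithin 𝕜 X (s ×ˢ t) (a, v) (1, 0)) t :=
    ((hX.fderivWithin (hs.prod ht) hmn).comp (contDiff_prodMk_right a).contDiffOn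
      fun _ hv => ⟨ha, hv⟩).clm_apply contDiffOn_const
  have hX' : DifferentiableOn 𝕜 X (s ×ˢ t) :=
    hX.differentiableOn (zero_lt_one.trans_le (le_add_self.trans hmn)).ne'
  exact hD.congr fun v hv => derivWithin_prodMk_left_eq_fderivWithin (hs a ha) hv
    (hX' (a, v) ⟨ha, hv⟩)

theorem derivWithin_derivWithin_comm {n : WithTop ℕ∞} (hn : minSmoothness 𝕜 2 ≤ n)
    (hX : ContDiffOn 𝕜 n X (s ×ˢ t)) (hs : UniqueDiffOn 𝕜 s) (ht : UniqueDiffOn 𝕜 t)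
    (ha : a ∈ s) (hb : b ∈ t) (ha' : a ∈ closure (interior s)) (hb' : b ∈ closure (interior t)) :
    derivWithin (fun u => derivWithin (fun v => X (u, v)) t b) s a
      = derivWithin (fun v => derivWithin (fun u => X (u, v)) s a) t b := by
  have hst : UniqueDiffOn 𝕜 (s ×ˢ t) := hs.prod ht
  have hab : (a, b) ∈ s ×ˢ t := ⟨ha, hb⟩
  have hX2 : ContDiffOn 𝕜 2 X (s ×ˢ t) := hX.of_le (le_minSmoothness.trans hn)
  have hX' : DifferentiableOn 𝕜 X (s ×ˢ t) := hX2.differentiableOn two_ne_zero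
  have hD : DifferentiableWithinAt 𝕜 (fderivWithin 𝕜 X (s ×ˢ t)) (s ×ˢ t) (a, b) :=
    (hX2.fderivWithin hst (m := 1) one_add_one_eq_two.le).differentiableOn one_ne_zero _ hab
  have happly (w : 𝕜 × 𝕜) := hD.hasFDerivWithinAt.clm_apply (hasFDerivWithinAt_const w (a, b) _)
  have hleft : EqOn (fun u => derivWithin (fun v => X (u, v)) t b)
      (fun u => fderivWithin 𝕜 X (s ×ˢ t) (u, b) (0, 1)) s := fun u hu =>
    derivWithin_prodMk_right_eq_fderivWithin (ht b hb) hu (hX' (u, b) ⟨hu, hb⟩)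
  have hright : EqOn (fun v => derivWithin (fun u => X (u, v)) s a)
      (fun v => fderivWithin 𝕜 X (s ×ˢ t) (a, v) (1, 0)) t := fun v hv =>
    derivWithin_prodMk_left_eq_fderivWithin (hs a ha) hv (hX' (a, v) ⟨ha, hv⟩)
  have hclosure : (a, b) ∈ closure (interior (s ×ˢ t)) := by
    rw [interior_prod_eq, closure_prod_eq]
    exact ⟨ha', hb'⟩
  have hsymm : IsSymmSndFDerivWithinAt 𝕜 X (s ×ˢ t) (a, b) :=
    (hX _ hab).isSymmSndFDerivWithinAt hn hst hclosure hab
  rw [derivWithin_congr hleft (hleft ha), derivWithin_congr hright (hright hb),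
    derivWithin_prodMk_left_eq_fderivWithin (X := fun p => fderivWithin 𝕜 X (s ×ˢ t) p (0, 1))
      (hs a ha) hb (happly _).differentiableWithinAt,
    derivWithin_prodMk_right_eq_fderivWithin (X := fun p => fderivWithin 𝕜 X (s ×ˢ t) p (1, 0))
      (ht b hb) ha (happly _).differentiableWithinAt,
    (happly _).fderivWithin (hst _ hab), (happly _).fderivWithin (hst _ hab)]
  simpa using hsymm (1, 0) (0, 1)

end PartialDerivatives

section SlowManifold

variable {E : Type*} [NormedAddCommGroup E] [NormedSpace ℝ E] {s : Set ℝ}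

theorem fderiv_derivWithin_eq_deriv_of_smul_deriv_eq {f : E → ℝ → E} {x : ℝ → ℝ → E} {α : ℝ}
    (hs : UniqueDiffOn ℝ s) (h0 : (0 : ℝ) ∈ s) (hf : DifferentiableAt ℝ (fun y => f y α) (x α 0))
    (hx : ContDiffOn ℝ 1 (fun p : ℝ × ℝ => x p.1 p.2) (univ ×ˢ s))
    (hode : ∀ ε ∈ s, ε • deriv (fun β => x β ε) α = f (x α ε) α) :
    fderiv ℝ (fun y => f y α) (x α 0) (derivWithin (x α) s 0) = deriv (fun β => x β 0) α := by
  have hcurve : ContDiffOn ℝ 1 (x α) s :=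
    hx.comp (contDiff_prodMk_right α).contDiffOn fun _ hε => ⟨mem_univ α, hε⟩
  have hpartial : ContDiffOn ℝ 0 (fun ε => deriv (fun β => x β ε) α) s := by
    simpa only [derivWithin_univ] using contDiffOn_derivWithin_prodMk_left uniqueDiffOn_univ hs
      (mem_univ α) hx (zero_add 1).le
  exact fderiv_derivWithin_eq_of_comp_eq_sub_smul (f := fun y => f y α) (hs 0 h0) h0 hf
    (hcurve.differentiableOn one_ne_zero 0 h0) (hpartial.continuousOn 0 h0)
    fun ε hε => by simpa only [Function.comp_apply, sub_zero] using (hode ε hε).symm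

theorem fderiv_iteratedDerivWithin_two_eq_of_smul_deriv_eq {f : E → ℝ → E} {x : ℝ → ℝ → E} {α : ℝ}
    (hs : Convex ℝ s) (hs' : (interior s).Nonempty) (h0 : (0 : ℝ) ∈ s)
    (hf : ContDiffAt ℝ 2 (fun y => f y α) (x α 0))
    (hx : ContDiffOn ℝ 2 (fun p : ℝ × ℝ => x p.1 p.2) (univ ×ˢ s))
    (hode : ∀ ε ∈ s, ε • deriv (fun β => x β ε) α = f (x α ε) α) :
    fderiv ℝ (fun y => f y α) (x α 0) (iteratedDerivWithin 2 (x α) s 0)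
      = (2 : ℝ) • deriv (fun β => derivWithin (x β) s 0) α
        - fderiv ℝ (fderiv ℝ fun y => f y α) (x α 0)
          (derivWithin (x α) s 0) (derivWithin (x α) s 0) := by
  have hsu : UniqueDiffOn ℝ s := uniqueDiffOn_convex hs hs'
  have hcurve : ContDiffOn ℝ 2 (x α) s :=
    hx.comp (contDiff_prodMk_right α).contDiffOn fun _ hε => ⟨mem_univ α, hε⟩
  have hpartial : ContDiffOn ℝ 1 (fun ε => deriv (fun β => x β ε) α) s := by
    simpa only [derivWithin_univ] using contDiffOn_derivWithin_prodMk_left uniqueDiffOn_univ hsu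
      (mem_univ α) hx one_add_one_eq_two.le
  have h0' : (0 : ℝ) ∈ closure (interior s) := by
    rw [hs.closure_interior_eq_closure_of_nonempty_interior hs']
    exact subset_closure h0
  have hmixed : deriv (fun β => derivWithin (x β) s 0) α
      = derivWithin (fun ε => deriv (fun β => x β ε) α) s 0 := by
    simpa only [derivWithin_univ] using derivWithin_derivWithin_comm (n := 2) (by simp) hx
      uniqueDiffOn_univ hsu (mem_univ α) h0 (by simp) h0'
  rw [hmixed]
  exact fderiv_iteratedDerivWithin_two_eq_of_comp_eq_sub_smul (f := fun y => f y α) hsu h0 hf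
    (hcurve 0 h0) (hpartial.differentiableOn one_ne_zero)
    (hpartial.continuousOn_derivWithin hsu le_rfl 0 h0)
    fun ε hε => by simpa only [Function.comp_apply, sub_zero] using (hode ε hε).symm

theorem stmt_15_general (hs : Convex ℝ s) (hs' : (interior s).Nonempty) (h0 : (0 : ℝ) ∈ s)
    (f : E → ℝ → E) (x : ℝ → ℝ → E)
    (hf : ∀ α, ContDiffAt ℝ 2 (fun y => f y α) (x α 0))
    (hx : ContDiffOn ℝ 2 (fun p : ℝ × ℝ => x p.1 p.2) (univ ×ˢ s))
    (hode : ∀ ε ∈ s, ∀ α, ε • deriv (fun β => x β ε) α = f (x α ε) α)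
    (hinv : ∀ α, (fderiv ℝ (fun y => f y α) (x α 0)).IsInvertible) (α : ℝ) :
    (1 / 2 : ℝ) • iteratedDerivWithin 2 (fun ε => x α ε) s 0
      = (fderiv ℝ (fun y => f y α) (x α 0)).inverse
        (deriv (fun β => (fderiv ℝ (fun y => f y β) (x β 0)).inverse
            (deriv (fun γ => x γ 0) β)) α
          - (1 / 2 : ℝ) • (fderiv ℝ (fun y => fderiv ℝ (fun z => f z α) y) (x α 0)
              ((fderiv ℝ (fun y => f y α) (x α 0)).inverse (deriv (fun γ => x γ 0) α)))
            ((fderiv ℝ (fun y => f y α) (x α 0)).inverse (deriv (fun γ => x γ 0) α))) := by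
  have hfirst (β : ℝ) : (fderiv ℝ (fun y => f y β) (x β 0)).inverse (deriv (fun γ => x γ 0) β)
      = derivWithin (x β) s 0 :=
    (hinv β).inverse_apply_eq.2 (fderiv_derivWithin_eq_deriv_of_smul_deriv_eq
      (uniqueDiffOn_convex hs hs') h0 ((hf β).differentiableAt two_ne_zero)
      (hx.of_le one_le_two) fun ε hε => hode ε hε β).symm
  have hsecond := fderiv_iteratedDerivWithin_two_eq_of_smul_deriv_eq hs hs' h0 (hf α) hx
    fun ε hε => hode ε hε α
  simp only [hfirst]
  rw [eq_comm, (hinv α).inverse_apply_eq, map_smul, hsecond]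
  module

end SlowManifold

/-- second-order coefficient of the slow manifold.  Let `f` be `C²`, let
`(α,ε) ↦ x_ε(α)` be a `C³` family satisfying `ε ∂_α x_ε(α) = f(x_ε(α),α)` for
`ε ∈ [0,ε₀)`, with `f(x₀(α),α) = 0` and `A(α) := D_x f(x₀(α),α)` invertible.  Then
`x₂(α) := (1/2) ∂²_ε x_ε(α)|_{ε=0}` satisfies
`x₂(α) = A(α)⁻¹ [ x₁′(α) − (1/2) D²_x f(x₀(α),α)(x₁(α),x₁(α)) ]` for every `α`, where
`x₁(α) = A(α)⁻¹ x₀′(α)`. -/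
theorem stmt_15 {n : ℕ}
    (f : EuclideanSpace ℝ (Fin n) → ℝ → EuclideanSpace ℝ (Fin n))
    (hfC : ContDiff ℝ 2 fun p : EuclideanSpace ℝ (Fin n) × ℝ => f p.1 p.2)
    (ε₀ : ℝ) (hε₀ : 0 < ε₀)
    (x : ℝ → ℝ → EuclideanSpace ℝ (Fin n))
    (hxC3 : ContDiffOn ℝ 3 (fun p : ℝ × ℝ => x p.1 p.2) (Set.univ ×ˢ Set.Ico 0 ε₀))
    (hode : ∀ ε ∈ Set.Ico (0 : ℝ) ε₀, ∀ α : ℝ,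
      ε • deriv (fun β => x β ε) α = f (x α ε) α)
    (heq : ∀ α : ℝ, f (x α 0) α = 0)
    (hinv : ∀ α : ℝ, ∃ e : EuclideanSpace ℝ (Fin n) ≃L[ℝ] EuclideanSpace ℝ (Fin n),
      (e : EuclideanSpace ℝ (Fin n) →L[ℝ] EuclideanSpace ℝ (Fin n))
        = fderiv ℝ (fun y => f y α) (x α 0)) :
    ∀ α : ℝ, (1 / 2 : ℝ) • iteratedDerivWithin 2 (fun ε => x α ε) (Set.Ico 0 ε₀) 0
      = (fderiv ℝ (fun y => f y α) (x α 0)).inverse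
        (deriv (fun β => (fderiv ℝ (fun y => f y β) (x β 0)).inverse
            (deriv (fun γ => x γ 0) β)) α
          - (1 / 2 : ℝ) • (fderiv ℝ (fun y => fderiv ℝ (fun z => f z α) y) (x α 0)
              ((fderiv ℝ (fun y => f y α) (x α 0)).inverse (deriv (fun γ => x γ 0) α)))
            ((fderiv ℝ (fun y => f y α) (x α 0)).inverse (deriv (fun γ => x γ 0) α))) := by
  exact stmt_15_general (convex_Ico 0 ε₀) (by simpa using hε₀) ⟨le_rfl, hε₀⟩ f x
    (fun α => (hfC.comp (contDiff_prodMk_left α)).contDiffAt) (hxC3.of_le (by norm_num)) hode hinv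
end
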